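/- arXiv:2502.04306 — 5 statements merged into one kernel-verified Lean document; each statement's English description precedes it below -/
import Mathlib

section
/- For all real numbers a, b and all real numbers x₁, x₂ with 0 < x₁ < x₂ and a·x₂ ≤ 1, one has x₁·σ(−a·x₁ + b) < x₂·σ(−a·x₂ + b); in other words, F(t) = t·σ(−a·t + b) is strictly monotonically increasing on the set {x : 0 < x and a·x ≤ 1}. -/
/-- The logistic (sigmoid) function `σ(t) = (1 + exp (−t))⁻¹`. -/
noncomputable def logistic (t : ℝ) : ℝ := (1 + Real.exp (-t))⁻¹

section

open Real

theorem mul_le_of_mul_le_of_nonneg {R : Type*} [Ring R] [LinearOrder R] [IsOrderedRing R]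
    {a x y c : R} (hx : 0 ≤ x) (hxy : x ≤ y) (hc : 0 ≤ c) (h : a * y ≤ c) : a * x ≤ c := by
  rcases le_total 0 a with ha | ha
  · exact (mul_le_mul_of_nonneg_left hxy ha).trans h
  · exact (mul_nonpos_of_nonpos_of_nonneg ha hx).trans hc

theorem mul_exp_mul_le_mul_exp_mul_of_mul_le_one {a x y : ℝ} (hax : a * x ≤ 1)
    (hay : a * y ≤ 1) (hxy : x ≤ y) : x * exp (a * y) ≤ y * exp (a * x) := by
  have : 0 ≤ y - x := sub_nonneg.mpr hxy
  -- The bound `s + 1 ≤ exp s` is multiplied by `y` if `0 ≤ y` and by `x` if `x ≤ y ≤ 0`;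
  -- `s` is `a * x - a * y` in the first case and its negative in the second.
  rcases le_total 0 y with hy | hy
  · have hx_le : x ≤ y * exp (a * x - a * y) := calc
      x = y - 1 * (y - x) := by ring
      _ ≤ y - a * y * (y - x) := by gcongr
      _ = y * (a * x - a * y + 1) := by ring
      _ ≤ y * exp (a * x - a * y) := by gcongr; exact add_one_le_exp _
    calc
      x * exp (a * y) ≤ y * exp (a * x - a * y) * exp (a * y) := by gcongr
      _ = y * exp (a * x) := by rw [mul_assoc, ← exp_add, sub_add_cancel]
  · have hle_y : x * exp (a * y - a * x) ≤ y := calc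
      x * exp (a * y - a * x) ≤ x * (a * y - a * x + 1) :=
        mul_le_mul_of_nonpos_left (add_one_le_exp _) (hxy.trans hy)
      _ = x + a * x * (y - x) := by ring
      _ ≤ x + 1 * (y - x) := by gcongr
      _ = y := by ring
    calc
      x * exp (a * y) = x * exp (a * y - a * x) * exp (a * x) := by
        rw [mul_assoc, ← exp_add, sub_add_cancel]
      _ ≤ y * exp (a * x) := by gcongr

theorem strictMonoOn_div_one_add_mul_exp (a : ℝ) {c : ℝ} (hc : 0 ≤ c) :
    StrictMonoOn (fun t ↦ t / (1 + c * exp (a * t))) {t | a * t ≤ 1} := by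
  intro x hax y hay hxy
  have hexp : x * exp (a * y) ≤ y * exp (a * x) :=
    mul_exp_mul_le_mul_exp_mul_of_mul_le_one hax hay hxy.le
  rw [div_lt_div_iff₀ (by positivity) (by positivity)]
  calc
    x * (1 + c * exp (a * y)) = x + c * (x * exp (a * y)) := by ring
    _ < y + c * (y * exp (a * x)) :=
      add_lt_add_of_lt_of_le hxy (mul_le_mul_of_nonneg_left hexp hc)
    _ = y * (1 + c * exp (a * x)) := by ring

theorem mul_logistic_neg_mul_add (a b t : ℝ) :
    t * logistic (-a * t + b) = t / (1 + exp (-b) * exp (a * t)) := by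
  rw [logistic, ← div_eq_mul_inv, ← exp_add]
  ring_nf

theorem stmt_2_general (a b : ℝ) :
    StrictMonoOn (fun t ↦ t * logistic (-a * t + b)) {t | a * t ≤ 1} := by
  simpa only [mul_logistic_neg_mul_add] using
    strictMonoOn_div_one_add_mul_exp a (exp_pos (-b)).le

end

/-- For all real `a, b` and all real `x₁, x₂` with `0 < x₁ < x₂` and `a·x₂ ≤ 1`, one has
`x₁·σ(−a·x₁ + b) < x₂·σ(−a·x₂ + b)`; i.e. `F(t) = t·σ(−a·t + b)` is strictly
monotonically increasing on `{x : 0 < x ∧ a·x ≤ 1}`. -/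
theorem stmt_2 (a b x₁ x₂ : ℝ) (hx₁ : 0 < x₁) (hx₁₂ : x₁ < x₂) (hax₂ : a * x₂ ≤ 1) :
    x₁ * logistic (-a * x₁ + b) < x₂ * logistic (-a * x₂ + b) := by
  exact stmt_2_general a b (mul_le_of_mul_le_of_nonneg hx₁.le hx₁₂.le zero_le_one hax₂) hax₂ hx₁₂
end

section
/- Let c, r be real numbers and let f be strictly increasing on [0,1] with 0 < f(s) for all s ∈ [0,1]. Then for all s₁, s₂ ∈ [0,1] with s₁ < s₂ and r·f(s₂) ≤ 1, one has f(s₁)·σ(c − f(s₁)·r) < f(s₂)·σ(c − f(s₂)·r). -/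
theorem logistic_eq_sigmoid : logistic = Real.sigmoid := rfl

theorem mul_le_of_nonneg_of_le_of_mul_le {R : Type*} [MulZeroClass R] [LinearOrder R]
    [PosMulMono R] [MulPosMono R] {r a b d : R} (ha : 0 ≤ a) (hab : a ≤ b) (hd : 0 ≤ d)
    (hrb : r * b ≤ d) : r * a ≤ d := by
  rcases le_total r 0 with hr | hr
  · exact (mul_nonpos_of_nonpos_of_nonneg hr ha).trans hd
  · exact (mul_le_mul_of_nonneg_left hab hr).trans hrb

theorem hasDerivAt_mul_sigmoid_sub_mul (c r x : ℝ) :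
    HasDerivAt (fun y ↦ y * Real.sigmoid (c - y * r))
      (Real.sigmoid (c - x * r) * (1 - r * x * (1 - Real.sigmoid (c - x * r)))) x := by
  have inner_deriv : HasDerivAt (fun y ↦ c - y * r) (-r) x :=
    (hasDerivAt_mul_const r).const_sub c
  have sigmoid_deriv := (Real.hasDerivAt_sigmoid (c - x * r)).comp x inner_deriv
  exact ((hasDerivAt_id' x).mul sigmoid_deriv).congr_deriv (by
    rw [Function.comp_apply]
    ring)

theorem one_sub_mul_one_sub_sigmoid_pos {t : ℝ} (ht : t ≤ 1) (u : ℝ) :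
    0 < 1 - t * (1 - Real.sigmoid u) :=
  calc
    0 < Real.sigmoid u := Real.sigmoid_pos u
    _ = 1 - 1 * (1 - Real.sigmoid u) := by ring
    _ ≤ 1 - t * (1 - Real.sigmoid u) := by
      gcongr
      exact sub_nonneg.2 (Real.sigmoid_le_one u)

theorem strictMonoOn_mul_sigmoid_sub_mul (c r : ℝ) :
    StrictMonoOn (fun x ↦ x * Real.sigmoid (c - x * r)) {x | r * x ≤ 1} := by
  have convex_domain : Convex ℝ {x : ℝ | r * x ≤ 1} :=
    convex_halfSpace_le (IsLinearMap.isLinearMap_smul r) 1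
  refine strictMonoOn_of_hasDerivWithinAt_pos convex_domain
    (fun x _ ↦ (hasDerivAt_mul_sigmoid_sub_mul c r x).continuousAt.continuousWithinAt)
    (fun x _ ↦ (hasDerivAt_mul_sigmoid_sub_mul c r x).hasDerivWithinAt) fun x hx ↦ ?_
  have hrx : r * x ≤ 1 := interior_subset (s := {x | r * x ≤ 1}) hx
  exact mul_pos (Real.sigmoid_pos _) (one_sub_mul_one_sub_sigmoid_pos hrx _)

theorem stmt_3_general {α : Type*} [Preorder α] {S : Set α} {f : α → ℝ}
    (hf : StrictMonoOn f S) (c r : ℝ) :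
    StrictMonoOn (fun s ↦ f s * logistic (c - f s * r)) {s ∈ S | r * f s ≤ 1} := by
  rw [logistic_eq_sigmoid]
  exact (strictMonoOn_mul_sigmoid_sub_mul c r).comp (hf.mono fun _ hs ↦ hs.1) fun _ hs ↦ hs.2

/-- Let `c, r` be real and `f` strictly increasing on `[0,1]` with `0 < f(s)` for all
`s ∈ [0,1]`. Then for all `s₁, s₂ ∈ [0,1]` with `s₁ < s₂` and `r·f(s₂) ≤ 1`, one has
`f(s₁)·σ(c − f(s₁)·r) < f(s₂)·σ(c − f(s₂)·r)`. -/
theorem stmt_3 (c r : ℝ) (f : ℝ → ℝ)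
    (hf_mono : StrictMonoOn f (Set.Icc (0:ℝ) 1))
    (hf_pos : ∀ s ∈ Set.Icc (0:ℝ) 1, 0 < f s)
    (s₁ s₂ : ℝ) (hs₁ : s₁ ∈ Set.Icc (0:ℝ) 1) (hs₂ : s₂ ∈ Set.Icc (0:ℝ) 1)
    (hlt : s₁ < s₂) (hr : r * f s₂ ≤ 1) :
    f s₁ * logistic (c - f s₁ * r) < f s₂ * logistic (c - f s₂ * r) := by
  have hr₁ : r * f s₁ ≤ 1 :=
    mul_le_of_nonneg_of_le_of_mul_le (hf_pos s₁ hs₁).le (hf_mono hs₁ hs₂ hlt).le zero_le_one hr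
  exact stmt_3_general hf_mono c r ⟨hs₁, hr₁⟩ ⟨hs₂, hr⟩ hlt
end

section
/- Let c, r be real numbers and let f be strictly increasing on [0,1] with f(s) < 1 for all s ∈ [0,1]. Then for all s₁, s₂ ∈ [0,1] with s₁ < s₂ and r·(1 − f(s₁)) ≥ −1, one has (1 − f(s₁))·σ((1 − f(s₁))·r − c) > (1 − f(s₂))·σ((1 − f(s₂))·r − c). -/
theorem mul_logistic_lt_mul_logistic_iff {x y s t : ℝ} :
    x * logistic s < y * logistic t ↔
      x + x * Real.exp (-t) < y + y * Real.exp (-s) := by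
  have hs : 0 < 1 + Real.exp (-s) := by positivity
  have ht : 0 < 1 + Real.exp (-t) := by positivity
  rw [logistic, logistic, ← div_eq_mul_inv, ← div_eq_mul_inv, div_lt_div_iff₀ hs ht,
    mul_one_add, mul_one_add]

theorem le_mul_exp_sub_mul {a b r : ℝ} (ha : 0 ≤ a) (hba : b ≤ a) (hr : -1 ≤ r * a) :
    b ≤ a * Real.exp ((a - b) * r) :=
  calc
    b = a + (a - b) * (-1) := by ring
    _ ≤ a + (a - b) * (r * a) := by gcongr
    _ = a * ((a - b) * r + 1) := by ring
    _ ≤ a * Real.exp ((a - b) * r) := by gcongr; exact Real.add_one_le_exp _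

theorem mul_exp_neg_le_mul_exp_neg {a b r : ℝ} (c : ℝ) (ha : 0 ≤ a) (hba : b ≤ a)
    (hr : -1 ≤ r * a) :
    b * Real.exp (-(a * r - c)) ≤ a * Real.exp (-(b * r - c)) :=
  calc
    b * Real.exp (-(a * r - c))
      ≤ a * Real.exp ((a - b) * r) * Real.exp (-(a * r - c)) := by
        gcongr
        exact le_mul_exp_sub_mul ha hba hr
    _ = a * Real.exp (-(b * r - c)) := by
        rw [mul_assoc, ← Real.exp_add]
        ring_nf

/-- Once the denominators are cleared, the terms without exponentials compare strictly by `b < a`,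
and the exponential terms compare weakly by `1 + x ≤ exp x` at `x = (a - b) * r`. -/
theorem stmt_4_general {a b r : ℝ} (c : ℝ) (ha : 0 ≤ a) (hba : b < a) (hr : -1 ≤ r * a) :
    b * logistic (b * r - c) < a * logistic (a * r - c) :=
  mul_logistic_lt_mul_logistic_iff.2 <|
    add_lt_add_of_lt_of_le hba (mul_exp_neg_le_mul_exp_neg c ha hba.le hr)

/-- Let `c, r` be real and `f` strictly increasing on `[0,1]` with `f(s) < 1` for all
`s ∈ [0,1]`. Then for all `s₁, s₂ ∈ [0,1]` with `s₁ < s₂` and `r·(1 − f(s₁)) ≥ −1`,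
one has `(1 − f(s₁))·σ((1 − f(s₁))·r − c) > (1 − f(s₂))·σ((1 − f(s₂))·r − c)`. -/
theorem stmt_4 (c r : ℝ) (f : ℝ → ℝ)
    (hf_mono : StrictMonoOn f (Set.Icc (0:ℝ) 1))
    (hf_lt : ∀ s ∈ Set.Icc (0:ℝ) 1, f s < 1)
    (s₁ s₂ : ℝ) (hs₁ : s₁ ∈ Set.Icc (0:ℝ) 1) (hs₂ : s₂ ∈ Set.Icc (0:ℝ) 1)
    (hlt : s₁ < s₂) (hr : r * (1 - f s₁) ≥ -1) :
    (1 - f s₁) * logistic ((1 - f s₁) * r - c)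
      > (1 - f s₂) * logistic ((1 - f s₂) * r - c) :=
  stmt_4_general c (sub_nonneg.2 (hf_lt s₁ hs₁).le)
    (sub_lt_sub_left (hf_mono hs₁ hs₂ hlt) 1) hr
end

section
/- Under the stated hypotheses, if L is nonempty, then for all s₁, s₂ ∈ [0,1] with s₁ < s₂ and r·(1 − f(s₁)) ≥ −1, one has h(s₁) > h(s₂), where h(s) = Σ_{j ∈ L} p(j)·d(s_w(j), s)·(1 − f(s))·σ((1 − f(s))·r − c′(j)); that is, the loser-side contribution to the per-sample influence is strictly decreasing in the sample's score on the region where r·(1 − f(s)) ≥ −1. -/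
theorem convex_setOf_le_const_mul (a r : ℝ) : Convex ℝ {u : ℝ | a ≤ r * u} :=
  convex_halfSpace_ge (LinearMap.mulLeft ℝ r).isLinear a

theorem hasDerivAt_mul_sigmoid (r c u : ℝ) :
    HasDerivAt (fun u ↦ u * Real.sigmoid (u * r - c))
      (Real.sigmoid (u * r - c) * (1 + r * u * (1 - Real.sigmoid (u * r - c)))) u := by
  have h_affine : HasDerivAt (fun u ↦ u * r - c) r u := (hasDerivAt_mul_const r).sub_const c
  refine ((hasDerivAt_id' u).mul ((Real.hasDerivAt_sigmoid _).comp u h_affine)).congr_deriv ?_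
  simp only [Function.comp_apply]
  ring

theorem strictMonoOn_mul_sigmoid (r c : ℝ) :
    StrictMonoOn (fun u ↦ u * Real.sigmoid (u * r - c)) {u | -1 ≤ r * u} := by
  refine strictMonoOn_of_hasDerivWithinAt_pos (convex_setOf_le_const_mul (-1) r)
    (fun u _ ↦ (hasDerivAt_mul_sigmoid r c u).continuousAt.continuousWithinAt)
    (fun u _ ↦ (hasDerivAt_mul_sigmoid r c u).hasDerivWithinAt) fun u hu ↦ ?_
  have hru : -1 ≤ r * u := interior_subset (s := {u | -1 ≤ r * u}) hu
  set σ := Real.sigmoid (u * r - c)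
  have hσ_pos : 0 < σ := Real.sigmoid_pos _
  have hσ_le : σ ≤ 1 + r * u * (1 - σ) := by
    linarith [mul_le_mul_of_nonneg_right hru (sub_nonneg.2 (Real.sigmoid_le_one (u * r - c)))]
  exact mul_pos hσ_pos (hσ_pos.trans_le hσ_le)

theorem stmt_6_general {ι α : Type*} [Preorder α] {S : Set α} (r : ℝ) (f : α → ℝ)
    (d : ι → α → ℝ) (hf_mono : StrictMonoOn f S) (hf_le : ∀ s ∈ S, f s ≤ 1)
    (L : Finset ι) (hL : L.Nonempty) (hd_anti : ∀ j ∈ L, AntitoneOn (d j) S)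
    (c p : ι → ℝ) (hp : ∀ j ∈ L, 0 < p j)
    {s₁ s₂ : α} (hs₁ : s₁ ∈ S) (hs₂ : s₂ ∈ S) (hd_pos : ∀ j ∈ L, 0 < d j s₁)
    (hlt : s₁ < s₂) (hr : -1 ≤ r * (1 - f s₁)) :
    ∑ j ∈ L, p j * d j s₂ * (1 - f s₂) * logistic ((1 - f s₂) * r - c j)
      < ∑ j ∈ L, p j * d j s₁ * (1 - f s₁) * logistic ((1 - f s₁) * r - c j) := by
  rw [logistic_eq_sigmoid]
  have hu_lt : 1 - f s₂ < 1 - f s₁ := sub_lt_sub_left (hf_mono hs₁ hs₂ hlt) 1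
  have hu_nonneg : 0 ≤ 1 - f s₂ := sub_nonneg.2 (hf_le s₂ hs₂)
  have hr₂ : -1 ≤ r * (1 - f s₂) :=
    (convex_setOf_le_const_mul (-1) r).ordConnected.out (x := 0) (by simp) hr
      ⟨hu_nonneg, hu_lt.le⟩
  refine Finset.sum_lt_sum_of_nonempty hL fun j hj ↦ ?_
  have hweight : p j * d j s₂ ≤ p j * d j s₁ :=
    mul_le_mul_of_nonneg_left (hd_anti j hj hs₁ hs₂ hlt.le) (hp j hj).le
  have hfactor := strictMonoOn_mul_sigmoid r (c j) hr₂ hr hu_lt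
  simp only [mul_assoc (p j * _)]
  exact mul_lt_mul_of_le_of_lt_of_nonneg_of_pos hweight hfactor
    (mul_nonneg hu_nonneg (Real.sigmoid_nonneg _)) (mul_pos (hp j hj) (hd_pos j hj))

/-- Loser-side contribution to the per-sample influence is strictly decreasing in the
sample's score on the region where `r·(1 − f(s)) ≥ −1`. Here `L` is a nonempty finite
index set of preference pairs in which `z` is the loser, with winner scores `sw`, winner
implicit rewards `c'`, and strictly positive base weights `p`; `f` is strictly increasing
on `[0,1]` with values `< 1`, and `d` is strictly monotonically increasing with respect
to `x − y` with `0 ≤ d ≤ 1` on `[0,1]²`. -/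
theorem stmt_6 {ι : Type*} (r : ℝ) (f : ℝ → ℝ) (d : ℝ → ℝ → ℝ)
    (hf_mono : StrictMonoOn f (Set.Icc (0:ℝ) 1))
    (hf_lt : ∀ s ∈ Set.Icc (0:ℝ) 1, f s < 1)
    (hd_mono : ∀ x ∈ Set.Icc (0:ℝ) 1, ∀ y ∈ Set.Icc (0:ℝ) 1,
      ∀ x' ∈ Set.Icc (0:ℝ) 1, ∀ y' ∈ Set.Icc (0:ℝ) 1,
        x - y < x' - y' → d x y < d x' y')
    (hd_range : ∀ x ∈ Set.Icc (0:ℝ) 1, ∀ y ∈ Set.Icc (0:ℝ) 1,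
      d x y ∈ Set.Icc (0:ℝ) 1)
    (L : Finset ι) (hL : L.Nonempty)
    (sw : ι → ℝ) (hsw : ∀ j ∈ L, sw j ∈ Set.Icc (0:ℝ) 1)
    (c' : ι → ℝ) (p : ι → ℝ) (hp : ∀ j ∈ L, 0 < p j)
    (s₁ s₂ : ℝ) (hs₁ : s₁ ∈ Set.Icc (0:ℝ) 1) (hs₂ : s₂ ∈ Set.Icc (0:ℝ) 1)
    (hlt : s₁ < s₂) (hr : r * (1 - f s₁) ≥ -1) :
    ∑ j ∈ L, p j * d (sw j) s₁ * (1 - f s₁) * logistic ((1 - f s₁) * r - c' j)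
      > ∑ j ∈ L, p j * d (sw j) s₂ * (1 - f s₂) * logistic ((1 - f s₂) * r - c' j) := by
  have hd_anti (j) (hj : j ∈ L) : StrictAntiOn (d (sw j)) (Set.Icc 0 1) := fun s hs t ht hst ↦
    hd_mono _ (hsw j hj) t ht _ (hsw j hj) s hs (sub_lt_sub_left hst _)
  exact stmt_6_general r f (fun j ↦ d (sw j)) hf_mono (fun s hs ↦ (hf_lt s hs).le) L hL
    (fun j hj ↦ (hd_anti j hj).antitoneOn) c' p hp hs₁ hs₂
    (fun j hj ↦ (hd_range _ (hsw j hj) _ hs₂).1.trans_lt (hd_anti j hj hs₁ hs₂ hlt)) hlt hr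
end

section
/- Suppose W and L are not both empty. Then for all s₁, s₂ ∈ [0,1] with s₁ < s₂, r·f(s₂) ≤ 1, and r·(1 − f(s₁)) ≥ −1 (i.e. −(1 − f(s₁))⁻¹ ≤ r ≤ f(s₂)⁻¹), one has I(s₁) < I(s₂); that is, the per-sample influence I(z) is strictly monotonically increasing with the score s_z on the region where −(1 − f(s_z))⁻¹ ≤ r ≤ f(s_z)⁻¹. -/
theorem hasDerivAt_mul_logistic_sub (c r u : ℝ) :
    HasDerivAt (fun x ↦ x * logistic (c - x * r))
      (logistic (c - u * r) * (1 - r * u * (1 - logistic (c - u * r)))) u := by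
  rw [logistic_eq_sigmoid]
  have inner : HasDerivAt (fun x ↦ c - x * r) (-r) u := by
    simpa using ((hasDerivAt_id u).mul_const r).const_sub c
  refine ((hasDerivAt_id u).mul ((Real.hasDerivAt_sigmoid _).comp u inner)).congr_deriv ?_
  simp only [id_eq, Function.comp_apply]
  ring

theorem strictMonoOn_mul_logistic_sub (c r : ℝ) :
    StrictMonoOn (fun u ↦ u * logistic (c - u * r)) {u | r * u ≤ 1} := by
  have region_convex : Convex ℝ {u : ℝ | r * u ≤ 1} :=
    (convex_Iic 1).linear_preimage (LinearMap.mulLeft ℝ r)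
  refine strictMonoOn_of_deriv_pos region_convex
    (fun u _ ↦ (hasDerivAt_mul_logistic_sub c r u).continuousAt.continuousWithinAt) fun u hu ↦ ?_
  have hru : r * u ≤ 1 := interior_subset (s := {u | r * u ≤ 1}) hu
  rw [(hasDerivAt_mul_logistic_sub c r u).deriv, logistic_eq_sigmoid]
  have sigmoid_pos := Real.sigmoid_pos (c - u * r)
  have one_sub_pos := sub_pos.2 (Real.sigmoid_lt_one (c - u * r))
  refine mul_pos sigmoid_pos (sub_pos.2 ?_)
  calc r * u * (1 - Real.sigmoid (c - u * r))
      ≤ 1 * (1 - Real.sigmoid (c - u * r)) := by gcongr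
    _ < 1 := by linarith

section Term

variable {a b r t u : ℝ}

theorem mul_mul_logistic_sub_lt (c : ℝ) (ha : 0 ≤ a) (hab : a < b)
    (ht : 0 ≤ t) (htu : t < u) (hru : r * u ≤ 1) :
    a * t * logistic (c - t * r) < b * u * logistic (c - u * r) := by
  have hrt : r * t ≤ 1 := by
    rcases le_total 0 r with hr | hr
    · exact (mul_le_mul_of_nonneg_left htu.le hr).trans hru
    · exact (mul_nonpos_of_nonpos_of_nonneg hr ht).trans zero_le_one
  rw [mul_assoc, mul_assoc]
  exact mul_lt_mul'' hab (strictMonoOn_mul_logistic_sub c r hrt hru htu) ha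
    (mul_nonneg ht (Real.sigmoid_nonneg _))

theorem mul_mul_logistic_mul_sub_lt (c : ℝ) (ha : 0 ≤ a) (hab : a < b)
    (ht : 0 ≤ t) (htu : t < u) (hru : -1 ≤ r * u) :
    a * t * logistic (t * r - c) < b * u * logistic (u * r - c) := by
  have reflect (x : ℝ) : -c - x * -r = x * r - c := by ring
  simpa only [reflect] using
    mul_mul_logistic_sub_lt (r := -r) (-c) ha hab ht htu (by linarith)

end Term

theorem sum_sub_sum_lt_sum_sub_sum {ι κ G : Type*} [AddCommGroup G] [PartialOrder G]
    [IsOrderedAddMonoid G] {W : Finset ι} {L : Finset κ} (hWL : W.Nonempty ∨ L.Nonempty)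
    {x₁ x₂ : ι → G} {y₁ y₂ : κ → G} (hx : ∀ i ∈ W, x₁ i < x₂ i) (hy : ∀ j ∈ L, y₂ j < y₁ j) :
    ∑ i ∈ W, x₁ i - ∑ j ∈ L, y₁ j < ∑ i ∈ W, x₂ i - ∑ j ∈ L, y₂ j := by
  rcases hWL with hW | hL
  · exact (sub_lt_sub_right (Finset.sum_lt_sum_of_nonempty hW hx) _).trans_le
      (sub_le_sub_left (Finset.sum_le_sum fun j hj ↦ (hy j hj).le) _)
  · exact (sub_le_sub_right (Finset.sum_le_sum fun i hi ↦ (hx i hi).le) _).trans_lt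
      (sub_lt_sub_left (Finset.sum_lt_sum_of_nonempty hL hy) _)

theorem stmt_7_general {α ι κ : Type*} [Preorder α] {S : Set α} {r : ℝ} {f : α → ℝ}
    {d : α → α → ℝ} (hf_mono : StrictMonoOn f S) (hf_mem : ∀ s ∈ S, f s ∈ Set.Icc 0 1)
    (hd_left : ∀ y ∈ S, StrictMonoOn (d · y) S) (hd_right : ∀ x ∈ S, StrictAntiOn (d x) S)
    (hd_nonneg : ∀ x ∈ S, ∀ y ∈ S, 0 ≤ d x y)
    {W : Finset ι} {L : Finset κ} (hWL : W.Nonempty ∨ L.Nonempty)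
    {sl : ι → α} {c p : ι → ℝ} {sw : κ → α} {c' q : κ → ℝ}
    (hsl : ∀ i ∈ W, sl i ∈ S) (hp : ∀ i ∈ W, 0 < p i)
    (hsw : ∀ j ∈ L, sw j ∈ S) (hq : ∀ j ∈ L, 0 < q j)
    {s₁ s₂ : α} (hs₁ : s₁ ∈ S) (hs₂ : s₂ ∈ S) (hlt : s₁ < s₂)
    (hr₂ : r * f s₂ ≤ 1) (hr₁ : -1 ≤ r * (1 - f s₁)) :
    (∑ i ∈ W, p i * d s₁ (sl i) * f s₁ * logistic (c i - f s₁ * r))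
        - ∑ j ∈ L, q j * d (sw j) s₁ * (1 - f s₁) * logistic ((1 - f s₁) * r - c' j)
      < (∑ i ∈ W, p i * d s₂ (sl i) * f s₂ * logistic (c i - f s₂ * r))
        - ∑ j ∈ L, q j * d (sw j) s₂ * (1 - f s₂) * logistic ((1 - f s₂) * r - c' j) := by
  have hf : f s₁ < f s₂ := hf_mono hs₁ hs₂ hlt
  refine sum_sub_sum_lt_sum_sub_sum hWL (fun i hi ↦ ?chosen) (fun j hj ↦ ?rejected)
  case chosen =>
    have weight_lt : p i * d s₁ (sl i) < p i * d s₂ (sl i) :=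
      mul_lt_mul_of_pos_left (hd_left _ (hsl i hi) hs₁ hs₂ hlt) (hp i hi)
    exact mul_mul_logistic_sub_lt _
      (mul_nonneg (hp i hi).le (hd_nonneg _ hs₁ _ (hsl i hi))) weight_lt (hf_mem _ hs₁).1 hf hr₂
  case rejected =>
    have weight_lt : q j * d (sw j) s₂ < q j * d (sw j) s₁ :=
      mul_lt_mul_of_pos_left (hd_right _ (hsw j hj) hs₁ hs₂ hlt) (hq j hj)
    exact mul_mul_logistic_mul_sub_lt _
      (mul_nonneg (hq j hj).le (hd_nonneg _ (hsw j hj) _ hs₂)) weight_lt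
      (sub_nonneg.2 (hf_mem _ hs₂).2) (sub_lt_sub_left hf 1) hr₁

/-- Finite-dataset form of Theorem 1 (per-sample influence monotonicity): with `W` the
finite set of pairs where `z` wins and `L` the finite set of pairs where `z` loses
(not both empty), with strictly positive base weights, the per-sample influence
`I(s) = Σ_{i ∈ W} p(i)·d(s, s_l(i))·f(s)·σ(c(i) − f(s)·r)
      − Σ_{j ∈ L} p(j)·d(s_w(j), s)·(1 − f(s))·σ((1 − f(s))·r − c′(j))`
is strictly increasing in the score `s` on the region where
`−(1 − f(s))⁻¹ ≤ r ≤ f(s)⁻¹` (expressed as `r·f(s₂) ≤ 1` and `r·(1 − f(s₁)) ≥ −1`). -/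
theorem stmt_7 {ι κ : Type*} (r : ℝ) (f : ℝ → ℝ) (d : ℝ → ℝ → ℝ)
    (hf_mono : StrictMonoOn f (Set.Icc (0:ℝ) 1))
    (hf_pos : ∀ s ∈ Set.Icc (0:ℝ) 1, 0 < f s)
    (hf_lt : ∀ s ∈ Set.Icc (0:ℝ) 1, f s < 1)
    (hd_mono : ∀ x ∈ Set.Icc (0:ℝ) 1, ∀ y ∈ Set.Icc (0:ℝ) 1,
      ∀ x' ∈ Set.Icc (0:ℝ) 1, ∀ y' ∈ Set.Icc (0:ℝ) 1,
        x - y < x' - y' → d x y < d x' y')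
    (hd_range : ∀ x ∈ Set.Icc (0:ℝ) 1, ∀ y ∈ Set.Icc (0:ℝ) 1,
      d x y ∈ Set.Icc (0:ℝ) 1)
    (W : Finset ι) (L : Finset κ) (hWL : W.Nonempty ∨ L.Nonempty)
    (sl : ι → ℝ) (hsl : ∀ i ∈ W, sl i ∈ Set.Icc (0:ℝ) 1)
    (c : ι → ℝ) (p : ι → ℝ) (hp : ∀ i ∈ W, 0 < p i)
    (sw : κ → ℝ) (hsw : ∀ j ∈ L, sw j ∈ Set.Icc (0:ℝ) 1)
    (c' : κ → ℝ) (q : κ → ℝ) (hq : ∀ j ∈ L, 0 < q j)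
    (s₁ s₂ : ℝ) (hs₁ : s₁ ∈ Set.Icc (0:ℝ) 1) (hs₂ : s₂ ∈ Set.Icc (0:ℝ) 1)
    (hlt : s₁ < s₂) (hr₂ : r * f s₂ ≤ 1) (hr₁ : r * (1 - f s₁) ≥ -1) :
    (∑ i ∈ W, p i * d s₁ (sl i) * f s₁ * logistic (c i - f s₁ * r))
        - ∑ j ∈ L, q j * d (sw j) s₁ * (1 - f s₁) * logistic ((1 - f s₁) * r - c' j)
      < (∑ i ∈ W, p i * d s₂ (sl i) * f s₂ * logistic (c i - f s₂ * r))
        - ∑ j ∈ L, q j * d (sw j) s₂ * (1 - f s₂) * logistic ((1 - f s₂) * r - c' j) :=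
  stmt_7_general hf_mono (fun s hs ↦ ⟨(hf_pos s hs).le, (hf_lt s hs).le⟩)
    (fun y hy x hx x' hx' hxx' ↦ hd_mono x hx y hy x' hx' y hy (sub_lt_sub_right hxx' y))
    (fun x hx y hy y' hy' hyy' ↦ hd_mono x hx y' hy' x hx y hy (sub_lt_sub_left hyy' x))
    (fun x hx y hy ↦ (hd_range x hx y hy).1) hWL hsl hp hsw hq hs₁ hs₂ hlt hr₂ hr₁
end
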